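/- Let n ≥ 3 be odd, let m_1, m_2 be positive integers with m_1 < F_{n-1} and m_2 < F_{n-1}, and set c_1 = F_{n+1} m_1 + F_n m_2, c_2 = F_n m_1 + F_{n-1} m_2. Let e_1 be an integer and put c̄_1 = c_1 + e_1. If c̄_1/c_2 > F_n/F_{n-1} (as real numbers), then e_1 = ⌈c̄_1 - c_2·F_n/F_{n-1}⌉, the ceiling of the real number c̄_1 - c_2·F_n/F_{n-1}. -/

import Mathlib

/-!
The quantity under the ceiling is `e₁ + (c₁ F_{n-1} - c₂ F_n) / F_{n-1}`. The `m₂` terms cancel in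
the numerator, leaving `(F_{n+1} F_{n-1} - F_n ^ 2) m₁`, which is `-m₁` by Cassini's identity for
odd `n`. So the quantity is `e₁ - m₁ / F_{n-1}` with `0 < m₁ / F_{n-1} < 1`, and its ceiling
is `e₁`.
-/

/-- Cassini's identity at odd indices, with the subtraction cleared. -/
lemma fib_cassini_odd (k : ℕ) :
    Nat.fib (2 * k + 2) * Nat.fib (2 * k) + 1 = Nat.fib (2 * k + 1) ^ 2 := by
  induction k with
  | zero => simp
  | succ k ih =>
    have h2 := Nat.fib_add_two (n := 2 * k)
    have h3 := Nat.fib_add_two (n := 2 * k + 1)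
    have h4 := Nat.fib_add_two (n := 2 * k + 2)
    simp only [show 2 * (k + 1) = 2 * k + 2 by ring] at *
    rw [h4, h3, h2]
    rw [h2] at ih
    nlinarith

theorem stmt_9 (n : ℕ) (hn : 3 ≤ n) (hodd : Odd n)
    (m₁ m₂ : ℤ) (hm₁ : 0 < m₁) (hm₂ : 0 < m₂)
    (hm₁' : m₁ < (Nat.fib (n - 1) : ℤ)) (hm₂' : m₂ < (Nat.fib (n - 1) : ℤ))
    (c₁ c₂ : ℤ)
    (hc₁ : c₁ = (Nat.fib (n + 1) : ℤ) * m₁ + (Nat.fib n : ℤ) * m₂)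
    (hc₂ : c₂ = (Nat.fib n : ℤ) * m₁ + (Nat.fib (n - 1) : ℤ) * m₂)
    (e₁ : ℤ) (cbar₁ : ℤ) (hbar : cbar₁ = c₁ + e₁)
    (hratio : (Nat.fib n : ℝ) / (Nat.fib (n - 1) : ℝ) < (cbar₁ : ℝ) / (c₂ : ℝ)) :
    e₁ = ⌈(cbar₁ : ℝ) - (c₂ : ℝ) * ((Nat.fib n : ℝ) / (Nat.fib (n - 1) : ℝ))⌉ := by
  obtain ⟨k, rfl⟩ := hodd
  have hC : (Nat.fib (2 * k + 2) : ℝ) * Nat.fib (2 * k) + 1 = (Nat.fib (2 * k + 1) : ℝ) ^ 2 := by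
    exact_mod_cast fib_cassini_odd k
  simp only [Nat.add_sub_cancel, show 2 * k + 1 + 1 = 2 * k + 2 by ring] at *
  have hm : (0 : ℝ) < m₁ := by exact_mod_cast hm₁
  have hlt : (m₁ : ℝ) < Nat.fib (2 * k) := by exact_mod_cast hm₁'
  have hF : (0 : ℝ) < Nat.fib (2 * k) := hm.trans hlt
  have key : (cbar₁ : ℝ) - (c₂ : ℝ) * ((Nat.fib (2 * k + 1) : ℝ) / (Nat.fib (2 * k) : ℝ))
      = e₁ - m₁ / Nat.fib (2 * k) := by
    rw [hbar, hc₁, hc₂]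
    push_cast
    field_simp
    linear_combination (m₁ : ℝ) * hC
  have hpos := div_pos hm hF
  have hlt1 := (div_lt_one hF).2 hlt
  rw [key, eq_comm, Int.ceil_eq_iff]
  constructor <;> linarith
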